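/- Let (M,h) be a Riemannian manifold of negative Ricci curvature. Then (M,h) admits no nowhere-vanishing Killing vector field of constant length; in particular M admits no strong Kropina metric with underlying Riemannian metric h. -/

import Mathlib

noncomputable section

open scoped BigOperators ENNReal

/-- Model space: `ℝⁿ` as a chart of the manifold `M`. -/
abbrev Evec (n : ℕ) := EuclideanSpace ℝ (Fin n)

/-- A (pointwise bilinear-form valued) metric tensor on `ℝⁿ`. -/
abbrev MetricT (n : ℕ) := Evec n → (Evec n →L[ℝ] Evec n →L[ℝ] ℝ)

/-- A metric tensor is Riemannian: smooth, symmetric and positive definite. -/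
def IsRiemannian {n : ℕ} (g : MetricT n) : Prop :=
  ContDiff ℝ (⊤ : ℕ∞) g ∧ (∀ x u v, g x u v = g x v u) ∧ (∀ x v, v ≠ 0 → 0 < g x v v)

/-- Lie bracket of vector fields on `ℝⁿ`. -/
def VBracket {n : ℕ} (X Y : Evec n → Evec n) : Evec n → Evec n :=
  fun x => fderiv ℝ Y x (X x) - fderiv ℝ X x (Y x)

/-- The Lie derivative `(L_W g)(X,Y)` of the metric `g` along `W`, evaluated on
vector fields `X`, `Y`. -/
def LieDerivMetric {n : ℕ} (g : MetricT n) (W X Y : Evec n → Evec n) : Evec n → ℝ :=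
  fun x => fderiv ℝ (fun p => g p (X p) (Y p)) x (W x)
    - g x (VBracket W X x) (Y x) - g x (X x) (VBracket W Y x)

/-- `W` is a Killing field of `g` : `L_W g = 0`. -/
def IsKillingField {n : ℕ} (g : MetricT n) (W : Evec n → Evec n) : Prop :=
  ∀ X Y : Evec n → Evec n, ContDiff ℝ (⊤ : ℕ∞) X → ContDiff ℝ (⊤ : ℕ∞) Y →
    ∀ x, LieDerivMetric g W X Y x = 0

/-- The Levi-Civita connection of `g`, given as a covariant derivative operator on
vector fields which is tensorial in the first slot, a derivation in the second slot,
torsion free, and metric compatible. -/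
structure LeviCivita {n : ℕ} (g : MetricT n) where
  nab : (Evec n → Evec n) → (Evec n → Evec n) → (Evec n → Evec n)
  compat : ∀ X Y Z : Evec n → Evec n, ContDiff ℝ (⊤ : ℕ∞) X → ContDiff ℝ (⊤ : ℕ∞) Y → ContDiff ℝ (⊤ : ℕ∞) Z →
    ∀ x, fderiv ℝ (fun p => g p (Y p) (Z p)) x (X x)
      = g x (nab X Y x) (Z x) + g x (Y x) (nab X Z x)
  torsion_free : ∀ X Y : Evec n → Evec n, ContDiff ℝ (⊤ : ℕ∞) X → ContDiff ℝ (⊤ : ℕ∞) Y →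
    ∀ x, nab X Y x - nab Y X x = VBracket X Y x
  tensorial : ∀ (f : Evec n → ℝ) (X Y : Evec n → Evec n) (x : Evec n),
    nab (fun p => f p • X p) Y x = f x • nab X Y x
  leibniz : ∀ (f : Evec n → ℝ) (X Y : Evec n → Evec n), ContDiff ℝ (⊤ : ℕ∞) f → ContDiff ℝ (⊤ : ℕ∞) Y →
    ∀ x, nab X (fun p => f p • Y p) x = fderiv ℝ f x (X x) • Y x + f x • nab X Y x

/-- A curve `c` is a geodesic for the covariant derivative `nab`: for every smooth
extension `V` of its velocity field, `∇_V V` vanishes along `c`. -/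
def IsGeodesicC {n : ℕ}
    (nab : (Evec n → Evec n) → (Evec n → Evec n) → (Evec n → Evec n))
    (c : ℝ → Evec n) : Prop :=
  ∀ V : Evec n → Evec n, ContDiff ℝ (⊤ : ℕ∞) V → (∀ t, V (c t) = deriv c t) →
    ∀ t, nab V V (c t) = 0

/-- The curvature tensor `R(u,v)w` at `x` (computed with constant extensions). -/
def RCurv {n : ℕ}
    (nab : (Evec n → Evec n) → (Evec n → Evec n) → (Evec n → Evec n))
    (u v w : Evec n) : Evec n → Evec n :=
  fun x => nab (fun _ => u) (nab (fun _ => v) (fun _ => w)) x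
    - nab (fun _ => v) (nab (fun _ => u) (fun _ => w)) x
    - nab (VBracket (fun _ => u) (fun _ => v)) (fun _ => w) x

/-- Ricci curvature `Ric_x(u,v)` as the trace (in the standard basis) of
`w ↦ R(w,u)v`. -/
def RicciCurv {n : ℕ}
    (nab : (Evec n → Evec n) → (Evec n → Evec n) → (Evec n → Evec n))
    (x u v : Evec n) : ℝ :=
  ∑ i : Fin n, (RCurv nab (EuclideanSpace.single i 1) u v x) i

/-!
Every vector field `W` satisfies Bochner's identity
`Ric(W, W) = div (∇_W W) - W (div W) - tr (∇W ∘ ∇W)`, for any torsion-free connection. If `W` is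
Killing, then `∇W` is skew-adjoint, so `div W = tr ∇W = 0` and `tr (∇W ∘ ∇W) ≤ 0`. If moreover
`g(W, W)` is constant, then `g(∇_W W, z) = -g(W, ∇_z W) = 0` for all `z`, so `∇_W W = 0`. Hence
`Ric(W, W) = -tr (∇W ∘ ∇W) ≥ 0`, which at a point of negative Ricci curvature forces `W` to vanish
there, and then `g(W, W) = 0` everywhere.
-/

open ContinuousLinearMap

section SkewAdjoint

variable {K V : Type*} [Field K] [AddCommGroup V] [Module K V]

theorem trace_eq_sum_div_of_isOrthoᵢ {ι : Type*} [Fintype ι] {B : LinearMap.BilinForm K V}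
    {b : Module.Basis ι K V} (hb : B.IsOrthoᵢ b) (hb' : ∀ i, B (b i) (b i) ≠ 0)
    (A : Module.End K V) :
    LinearMap.trace K V A = ∑ i, B (A (b i)) (b i) / B (b i) (b i) := by
  classical
  have repr_mul (v : V) (i : ι) : B v (b i) = b.repr v i * B (b i) (b i) := by
    conv_lhs => rw [← b.sum_repr v]
    rw [map_sum, LinearMap.sum_apply, Finset.sum_eq_single_of_mem i (Finset.mem_univ i)]
    · simp
    · intro j _ hj
      have : B (b j) (b i) = 0 := hb hj
      simp [this]
  rw [LinearMap.trace_eq_matrix_trace K b, Matrix.trace]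
  refine Finset.sum_congr rfl fun i _ ↦ ?_
  rw [Matrix.diag_apply, LinearMap.toMatrix_apply, repr_mul, mul_div_cancel_right₀ _ (hb' i)]

variable [FiniteDimensional K V] {B : LinearMap.BilinForm K V} {A : Module.End K V}

theorem trace_eq_zero_of_isSkewAdjoint [NeZero (2 : K)] (hB : B.Nondegenerate)
    (hA : B.IsSkewAdjoint A) : LinearMap.trace K V A = 0 := by
  have transpose_eq : Module.Dual.transpose A = (B.toDual hB).conj (-A) := by
    ext φ v
    obtain ⟨u, rfl⟩ := (B.toDual hB).surjective φ
    calc B u (A v) = -B (A u) v := by simp [show B (A u) v = -B u (A v) by simpa using hA u v]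
      _ = (B.toDual hB).conj (-A) (B.toDual hB u) v := by
        simp [LinearEquiv.conj_apply, LinearMap.BilinForm.toDual_def]
  have trace_eq_neg : LinearMap.trace K V A = -LinearMap.trace K V A := by
    conv_lhs => rw [← LinearMap.trace_transpose' A, transpose_eq, LinearMap.trace_conj', map_neg]
  have : (2 : K) * LinearMap.trace K V A = 0 := by linear_combination trace_eq_neg
  exact (mul_eq_zero.mp this).resolve_left two_ne_zero

theorem trace_mul_self_nonpos_of_isSkewAdjoint [LinearOrder K] [IsStrictOrderedRing K]
    (hB : LinearMap.IsSymm B) (hpos : ∀ v ≠ 0, 0 < B v v) (hA : B.IsSkewAdjoint A) :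
    LinearMap.trace K V (A * A) ≤ 0 := by
  have := invertibleOfNonzero (two_ne_zero (α := K))
  obtain ⟨b, hb⟩ := LinearMap.BilinForm.exists_orthogonal_basis hB
  have hb' (i) : 0 < B (b i) (b i) := hpos _ (b.ne_zero i)
  rw [trace_eq_sum_div_of_isOrthoᵢ hb fun i ↦ (hb' i).ne']
  refine Finset.sum_nonpos fun i _ ↦ div_nonpos_of_nonpos_of_nonneg ?_ (hb' i).le
  have nonneg (v : V) : 0 ≤ B v v := by
    rcases eq_or_ne v 0 with rfl | hv
    · simp
    · exact (hpos v hv).le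
  calc B (A (A (b i))) (b i) = -B (A (b i)) (A (b i)) := by simpa using hA (A (b i)) (b i)
    _ ≤ 0 := neg_nonpos.mpr (nonneg _)

end SkewAdjoint

section Calculus

variable {𝕜 E F G H : Type*} [NontriviallyNormedField 𝕜]
  [NormedAddCommGroup E] [NormedSpace 𝕜 E] [NormedAddCommGroup F] [NormedSpace 𝕜 F]
  [NormedAddCommGroup G] [NormedSpace 𝕜 G] [NormedAddCommGroup H] [NormedSpace 𝕜 H] {x : E}

theorem fderiv_clm_apply_apply {B : E → F →L[𝕜] G →L[𝕜] H} {X : E → F} {Y : E → G}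
    (hB : DifferentiableAt 𝕜 B x) (hX : DifferentiableAt 𝕜 X x) (hY : DifferentiableAt 𝕜 Y x)
    (e : E) :
    fderiv 𝕜 (fun p ↦ B p (X p) (Y p)) x e =
      fderiv 𝕜 B x e (X x) (Y x) + B x (fderiv 𝕜 X x e) (Y x) +
        B x (X x) (fderiv 𝕜 Y x e) := by
  rw [fderiv_clm_apply (hB.clm_apply hX) hY, fderiv_clm_apply hB hX]
  simp only [add_apply, flip_apply, comp_apply]
  abel

theorem fderiv_clm_apply_apply_const {B : E → F →L[𝕜] G →L[𝕜] H}
    (hB : DifferentiableAt 𝕜 B x) (u : F) (v : G) (e : E) :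
    fderiv 𝕜 (fun p ↦ B p u v) x e = fderiv 𝕜 B x e u v := by
  simp [fderiv_clm_apply_apply hB (differentiableAt_const u) (differentiableAt_const v)]

theorem fderiv_trace [CompleteSpace 𝕜] [FiniteDimensional 𝕜 F] {A : E → F →L[𝕜] F}
    (hA : DifferentiableAt 𝕜 A x) (e : E) :
    fderiv 𝕜 (fun p ↦ LinearMap.trace 𝕜 F (A p)) x e = LinearMap.trace 𝕜 F (fderiv 𝕜 A x e) := by
  let tr : (F →L[𝕜] F) →L[𝕜] 𝕜 :=
    LinearMap.toContinuousLinearMap (LinearMap.trace 𝕜 F ∘ₗ coeLM 𝕜)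
  exact congr($((tr.hasFDerivAt.comp x hA.hasFDerivAt).fderiv) e)

theorem isInvertible_of_apply_self_ne_zero [CompleteSpace 𝕜] [FiniteDimensional 𝕜 E]
    {B : E →L[𝕜] E →L[𝕜] 𝕜} (hB : ∀ v ≠ 0, B v v ≠ 0) : B.IsInvertible := by
  have ker_eq_bot : LinearMap.ker (B : E →ₗ[𝕜] E →L[𝕜] 𝕜) = ⊥ :=
    LinearMap.ker_eq_bot'.mpr fun v hv ↦ by_contra fun hne ↦ hB v hne (by simpa using congr($hv v))
  have finrank_eq : Module.finrank 𝕜 E = Module.finrank 𝕜 (E →L[𝕜] 𝕜) := by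
    rw [← (LinearMap.toContinuousLinearMap (𝕜 := 𝕜) (E := E) (F' := 𝕜)).finrank_eq]
    exact Subspace.dual_finrank_eq.symm
  exact ⟨(LinearEquiv.ofInjectiveOfFinrankEq (B : E →ₗ[𝕜] E →L[𝕜] 𝕜)
    (LinearMap.ker_eq_bot.mp ker_eq_bot) finrank_eq).toContinuousLinearEquiv, rfl⟩

end Calculus

section Connection

variable {E : Type*} [NormedAddCommGroup E] [NormedSpace ℝ E]
  {Γ : E → E →L[ℝ] E →L[ℝ] E} {W : E → E} {x : E}

/-- The covariant differential `u ↦ ∇_u W` at `x` of a vector field `W`, for the affine connection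
`∇ = D + Γ` on the vector space `E`. -/
def covDeriv (Γ : E → E →L[ℝ] E →L[ℝ] E) (W : E → E) (x : E) : E →L[ℝ] E :=
  fderiv ℝ W x + (Γ x).flip (W x)

theorem covDeriv_apply (u : E) : covDeriv Γ W x u = fderiv ℝ W x u + Γ x u (W x) := rfl

/-- The endomorphism `e ↦ R(e, u)v` at `x`, where `R` is the curvature of the affine connection
`∇ = D + Γ`; its trace is the Ricci curvature `Ric(u, v)`. -/
def curvatureOperator (Γ : E → E →L[ℝ] E →L[ℝ] E) (x u v : E) : E →L[ℝ] E :=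
  ((fderiv ℝ Γ x).flip u).flip v + (Γ x).flip (Γ x u v) -
    (fderiv ℝ Γ x u).flip v - Γ x u ∘L (Γ x).flip v

theorem curvatureOperator_apply (u v e : E) :
    curvatureOperator Γ x u v e =
      fderiv ℝ Γ x e u v + Γ x e (Γ x u v) - fderiv ℝ Γ x u e v - Γ x u (Γ x e v) := rfl

theorem differentiableAt_covDeriv (hΓ : DifferentiableAt ℝ Γ x) (hW : ContDiffAt ℝ 2 W x) :
    DifferentiableAt ℝ (covDeriv Γ W) x := by
  have hDW : DifferentiableAt ℝ (fderiv ℝ W) x :=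
    (hW.fderiv_right (m := 1) (by norm_num)).differentiableAt (by simp)
  exact hDW.add (((flipₗᵢ ℝ E E E).differentiableAt.comp x hΓ).clm_apply
    (hW.differentiableAt (by simp)))

theorem fderiv_covDeriv_apply (hΓ : DifferentiableAt ℝ Γ x) (hW : ContDiffAt ℝ 2 W x) (e v : E) :
    fderiv ℝ (covDeriv Γ W) x e v =
      fderiv ℝ (fderiv ℝ W) x e v + fderiv ℝ Γ x e v (W x) + Γ x v (fderiv ℝ W x e) := by
  have hW' : DifferentiableAt ℝ W x := hW.differentiableAt (by simp)
  have hDW : DifferentiableAt ℝ (fderiv ℝ W) x :=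
    (hW.fderiv_right (m := 1) (by norm_num)).differentiableAt (by simp)
  have hv : DifferentiableAt ℝ (fun _ : E ↦ v) x := differentiableAt_const v
  calc fderiv ℝ (covDeriv Γ W) x e v = fderiv ℝ (fun p ↦ covDeriv Γ W p v) x e := by
        simp [fderiv_clm_apply (differentiableAt_covDeriv hΓ hW) hv]
    _ = fderiv ℝ (fun p ↦ fderiv ℝ W p v) x e + fderiv ℝ (fun p ↦ Γ p v (W p)) x e := by
        rw [← add_apply, ← fderiv_fun_add (hDW.clm_apply hv) ((hΓ.clm_apply hv).clm_apply hW')]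
        rfl
    _ = _ := by
        rw [fderiv_clm_apply hDW hv, fderiv_clm_apply_apply hΓ hv hW']
        simp [add_assoc]

-- The Ricci identity `R(e, W)W = ∇_e ∇_W W - ∇_W ∇_e W - ∇_[e, W] W` for constant fields `e`. The
-- commutator corrects `D(∇W)(W)` to the covariant derivative of the endomorphism field `∇W`.
theorem curvatureOperator_self_eq (hΓ : DifferentiableAt ℝ Γ x)
    (hsymm : ∀ u v, Γ x u v = Γ x v u) (hW : ContDiffAt ℝ 2 W x) :
    curvatureOperator Γ x (W x) (W x) =
      covDeriv Γ (fun p ↦ covDeriv Γ W p (W p)) x - fderiv ℝ (covDeriv Γ W) x (W x) -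
        covDeriv Γ W x ∘L covDeriv Γ W x +
        (covDeriv Γ W x ∘L Γ x (W x) - Γ x (W x) ∘L covDeriv Γ W x) := by
  ext e
  have hsymm₂ : fderiv ℝ (fderiv ℝ W) x e (W x) = fderiv ℝ (fderiv ℝ W) x (W x) e :=
    hW.isSymmSndFDerivAt (by simp) e (W x)
  have hDW : covDeriv Γ (fun p ↦ covDeriv Γ W p (W p)) x e =
      fderiv ℝ (covDeriv Γ W) x e (W x) + covDeriv Γ W x (fderiv ℝ W x e) +
        Γ x e (covDeriv Γ W x (W x)) := by
    rw [covDeriv_apply,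
      fderiv_clm_apply (differentiableAt_covDeriv hΓ hW) (hW.differentiableAt (by simp))]
    simp [add_comm]
  simp only [add_apply, sub_apply, comp_apply]
  rw [hDW, fderiv_covDeriv_apply hΓ hW, fderiv_covDeriv_apply hΓ hW, hsymm₂, hsymm (W x) e,
    curvatureOperator_apply]
  simp only [covDeriv_apply, map_add]
  abel

variable [FiniteDimensional ℝ E]

theorem trace_curvatureOperator_self (hΓ : DifferentiableAt ℝ Γ x)
    (hsymm : ∀ u v, Γ x u v = Γ x v u) (hW : ContDiffAt ℝ 2 W x) :
    LinearMap.trace ℝ E (curvatureOperator Γ x (W x) (W x)) =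
      LinearMap.trace ℝ E (covDeriv Γ (fun p ↦ covDeriv Γ W p (W p)) x) -
        fderiv ℝ (fun p ↦ LinearMap.trace ℝ E (covDeriv Γ W p)) x (W x) -
        LinearMap.trace ℝ E (covDeriv Γ W x ∘L covDeriv Γ W x) := by
  have trace_comm : LinearMap.trace ℝ E (covDeriv Γ W x ∘L Γ x (W x)) =
      LinearMap.trace ℝ E (Γ x (W x) ∘L covDeriv Γ W x) :=
    LinearMap.trace_mul_comm ℝ (covDeriv Γ W x : Module.End ℝ E) (Γ x (W x))
  rw [curvatureOperator_self_eq hΓ hsymm hW, fderiv_trace (differentiableAt_covDeriv hΓ hW)]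
  simp only [toLinearMap_add, toLinearMap_sub, map_add, map_sub]
  rw [trace_comm]
  ring

end Connection

section Metric

set_option maxSynthPendingDepth 3

variable {E : Type*} [NormedAddCommGroup E] [NormedSpace ℝ E] {g : E → E →L[ℝ] E →L[ℝ] ℝ} {x : E}

/-- A metric tensor on the vector space `E` is pseudo-Riemannian: smooth, symmetric and
nondegenerate, the latter meaning that `v ↦ g x v` is an isomorphism onto the dual space. -/
structure IsPseudoRiemannian (g : E → E →L[ℝ] E →L[ℝ] ℝ) : Prop where
  contDiff : ContDiff ℝ (⊤ : ℕ∞) g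
  symm : ∀ x u v, g x u v = g x v u
  isInvertible : ∀ x, (g x).IsInvertible

/-- The Christoffel symbols of the first kind: the Koszul formula for `g(∇_u v, z)` with constant
fields `u`, `v`, `z`. -/
def koszulForm (g : E → E →L[ℝ] E →L[ℝ] ℝ) (x : E) : E →L[ℝ] E →L[ℝ] E →L[ℝ] ℝ :=
  (2⁻¹ : ℝ) • (fderiv ℝ g x + (fderiv ℝ g x).flip -
    (flipₗᵢ ℝ E E ℝ).toContinuousLinearEquiv.toContinuousLinearMap ∘L (fderiv ℝ g x).flip)

theorem koszulForm_apply (u v z : E) :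
    koszulForm g x u v z =
      2⁻¹ * (fderiv ℝ g x u v z + fderiv ℝ g x v u z - fderiv ℝ g x z u v) := rfl

/-- The Christoffel symbols of the second kind, so that `∇ = D + christoffel g` is the Levi-Civita
connection of `g`. Where `g x` is not invertible, `inverse` makes them zero. -/
def christoffel (g : E → E →L[ℝ] E →L[ℝ] ℝ) (x : E) : E →L[ℝ] E →L[ℝ] E :=
  compL ℝ E (E →L[ℝ] ℝ) E (inverse (g x)) ∘L koszulForm g x

theorem christoffel_apply (u v : E) :
    christoffel g x u v = inverse (g x) (koszulForm g x u v) := rfl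

theorem contDiff_koszulForm (hg : ContDiff ℝ (⊤ : ℕ∞) g) :
    ContDiff ℝ (⊤ : ℕ∞) (koszulForm g) := by
  have hDg : ContDiff ℝ (⊤ : ℕ∞) (fderiv ℝ g) := hg.fderiv_right (by simp)
  have hflip : ContDiff ℝ (⊤ : ℕ∞) fun p ↦ (fderiv ℝ g p).flip :=
    (flipₗᵢ ℝ E E (E →L[ℝ] ℝ)).contDiff.comp hDg
  exact ((hDg.add hflip).sub (contDiff_const.clm_comp hflip)).const_smul _

namespace IsPseudoRiemannian

theorem differentiableAt (hg : IsPseudoRiemannian g) : DifferentiableAt ℝ g x :=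
  hg.contDiff.differentiable (by simp) x

theorem contDiff_christoffel [CompleteSpace E] (hg : IsPseudoRiemannian g) :
    ContDiff ℝ (⊤ : ℕ∞) (christoffel g) := by
  have hinv : ContDiff ℝ (⊤ : ℕ∞) fun x ↦ inverse (g x) :=
    contDiff_iff_contDiffAt.mpr fun x ↦
      (hg.isInvertible x).contDiffAt_map_inverse.comp x hg.contDiff.contDiffAt
  exact ((compL ℝ E (E →L[ℝ] ℝ) E).contDiff.comp hinv).clm_comp (contDiff_koszulForm hg.contDiff)

theorem differentiable_christoffel [CompleteSpace E] (hg : IsPseudoRiemannian g) :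
    Differentiable ℝ (christoffel g) :=
  hg.contDiff_christoffel.differentiable (by simp)

theorem fderiv_symm (hg : IsPseudoRiemannian g) (u v z : E) :
    fderiv ℝ g x u v z = fderiv ℝ g x u z v := by
  simp_rw [← fderiv_clm_apply_apply_const hg.differentiableAt, hg.symm _ v z]

theorem apply_christoffel (hg : IsPseudoRiemannian g) (u v : E) :
    g x (christoffel g x u v) = koszulForm g x u v := by
  rw [christoffel_apply, (hg.isInvertible x).self_apply_inverse]

theorem christoffel_symm (hg : IsPseudoRiemannian g) (u v : E) :
    christoffel g x u v = christoffel g x v u := by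
  rw [christoffel_apply, christoffel_apply]
  congr 1
  ext z
  rw [koszulForm_apply, koszulForm_apply, hg.fderiv_symm z u v]
  ring

theorem fderiv_eq_christoffel (hg : IsPseudoRiemannian g) (u v z : E) :
    fderiv ℝ g x u v z = g x (christoffel g x u v) z + g x v (christoffel g x u z) := by
  rw [hg.symm x v, hg.apply_christoffel, hg.apply_christoffel, koszulForm_apply,
    koszulForm_apply, hg.fderiv_symm u z v, hg.fderiv_symm v u z, hg.fderiv_symm z u v]
  ring

theorem fderiv_apply_eq_covDeriv (hg : IsPseudoRiemannian g) {Y Z : E → E}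
    (hY : DifferentiableAt ℝ Y x) (hZ : DifferentiableAt ℝ Z x) (u : E) :
    fderiv ℝ (fun p ↦ g p (Y p) (Z p)) x u =
      g x (covDeriv (christoffel g) Y x u) (Z x) + g x (Y x) (covDeriv (christoffel g) Z x u) := by
  rw [fderiv_clm_apply_apply hg.differentiableAt hY hZ, hg.fderiv_eq_christoffel]
  simp only [covDeriv_apply, map_add, add_apply]
  ring

theorem eq_christoffel (hg : IsPseudoRiemannian g) {Γ : E → E → E}
    (hsymm : ∀ u v, Γ u v = Γ v u)
    (hcompat : ∀ u v z, fderiv ℝ g x u v z = g x (Γ u v) z + g x v (Γ u z)) (u v : E) :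
    Γ u v = christoffel g x u v := by
  apply (hg.isInvertible x).injective
  ext z
  rw [hg.apply_christoffel, koszulForm_apply, hcompat u v z, hcompat v u z, hcompat z u v,
    hsymm v u, hsymm z u, hsymm z v, hg.symm x v, hg.symm x u]
  ring

theorem covDeriv_self_eq_zero (hg : IsPseudoRiemannian g) {W : E → E}
    (hW : DifferentiableAt ℝ W x)
    (hskew : (g x).toBilinForm.IsSkewAdjoint (covDeriv (christoffel g) W x))
    {c : ℝ} (hc : ∀ p, g p (W p) (W p) = c) :
    covDeriv (christoffel g) W x (W x) = 0 := by
  apply (hg.isInvertible x).injective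
  ext z
  have hconst : 0 = g x (covDeriv (christoffel g) W x z) (W x) +
      g x (W x) (covDeriv (christoffel g) W x z) := by
    rw [← hg.fderiv_apply_eq_covDeriv hW hW]
    simp [hc]
  have hskew' : g x (covDeriv (christoffel g) W x (W x)) z =
      -g x (W x) (covDeriv (christoffel g) W x z) := by simpa using hskew (W x) z
  rw [hg.symm x _ (W x)] at hconst
  rw [hskew', map_zero, zero_apply]
  linarith

theorem nondegenerate [FiniteDimensional ℝ E] (hg : IsPseudoRiemannian g) (x : E) :
    (g x).toBilinForm.Nondegenerate := by
  refine LinearMap.BilinForm.Nondegenerate.ofSeparatingLeft fun v hv ↦ ?_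
  apply (hg.isInvertible x).injective
  ext z
  simpa using hv z

end IsPseudoRiemannian

end Metric

section Killing

variable {n : ℕ} {g : MetricT n} {W : Evec n → Evec n} {x : Evec n}

theorem IsRiemannian.isPseudoRiemannian (hg : IsRiemannian g) : IsPseudoRiemannian g where
  contDiff := hg.1
  symm := hg.2.1
  isInvertible x := isInvertible_of_apply_self_ne_zero fun v hv ↦ (hg.2.2 x v hv).ne'

theorem LeviCivita.nab_const_const (LC : LeviCivita g) (hg : IsPseudoRiemannian g)
    (u v : Evec n) :
    LC.nab (fun _ ↦ u) (fun _ ↦ v) x = christoffel g x u v := by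
  refine hg.eq_christoffel (Γ := fun u v ↦ LC.nab (fun _ ↦ u) (fun _ ↦ v) x)
    (fun u v ↦ ?_) (fun u v z ↦ ?_) u v
  · have := LC.torsion_free (fun _ ↦ u) (fun _ ↦ v) contDiff_const contDiff_const x
    simpa [VBracket, sub_eq_zero] using this
  · rw [← fderiv_clm_apply_apply_const hg.differentiableAt]
    exact LC.compat (fun _ ↦ u) (fun _ ↦ v) (fun _ ↦ z)
      contDiff_const contDiff_const contDiff_const x

theorem LeviCivita.nab_const (LC : LeviCivita g) (hg : IsPseudoRiemannian g)
    {Y : Evec n → Evec n} (hY : ContDiff ℝ (⊤ : ℕ∞) Y) (u : Evec n) :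
    LC.nab (fun _ ↦ u) Y x = covDeriv (christoffel g) Y x u := by
  apply (hg.isInvertible x).injective
  ext z
  have hcompat := LC.compat (fun _ ↦ u) Y (fun _ ↦ z) contDiff_const hY contDiff_const x
  rw [hg.fderiv_apply_eq_covDeriv (hY.differentiable (by simp) x) (differentiableAt_const z),
    LC.nab_const_const hg, covDeriv_apply (W := fun _ ↦ z)] at hcompat
  simpa using hcompat.symm

theorem LeviCivita.ricciCurv_eq_trace (LC : LeviCivita g) (hg : IsPseudoRiemannian g)
    (u v : Evec n) :
    RicciCurv LC.nab x u v =
      LinearMap.trace ℝ (Evec n) (curvatureOperator (christoffel g) x u v) := by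
  have nab_nab (a b c : Evec n) :
      LC.nab (fun _ ↦ a) (LC.nab (fun _ ↦ b) (fun _ ↦ c)) x =
        fderiv ℝ (christoffel g) x a b c + christoffel g x a (christoffel g x b c) := by
    rw [funext fun p ↦ LC.nab_const_const hg (x := p) b c, LC.nab_const hg
      ((hg.contDiff_christoffel.clm_apply contDiff_const).clm_apply contDiff_const),
      covDeriv_apply, fderiv_clm_apply_apply_const hg.differentiable_christoffel.differentiableAt]
  have bracket_const (a b : Evec n) : VBracket (fun _ ↦ a) (fun _ ↦ b) = fun _ ↦ 0 := by
    ext1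
    simp [VBracket]
  rw [LinearMap.trace_eq_matrix_trace ℝ (EuclideanSpace.basisFun (Fin n) ℝ).toBasis, RicciCurv,
    Matrix.trace]
  refine Finset.sum_congr rfl fun i _ ↦ ?_
  have nab_zero (c : Evec n) : LC.nab (fun _ ↦ 0) (fun _ ↦ c) x = 0 := by
    simp [LC.nab_const_const hg]
  simp [RCurv, nab_nab, bracket_const, nab_zero, LinearMap.toMatrix_apply,
    curvatureOperator_apply, sub_sub]

theorem IsKillingField.isSkewAdjoint_covDeriv (hK : IsKillingField g W)
    (hg : IsPseudoRiemannian g) (x : Evec n) :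
    (g x).toBilinForm.IsSkewAdjoint (covDeriv (christoffel g) W x) := by
  intro u v
  have hLie := hK (fun _ ↦ u) (fun _ ↦ v) contDiff_const contDiff_const x
  simp only [LieDerivMetric, VBracket, fderiv_clm_apply_apply_const hg.differentiableAt,
    hg.fderiv_eq_christoffel, fderiv_fun_const, Pi.zero_apply, zero_apply, zero_sub, map_neg,
    neg_apply] at hLie
  simp only [toBilinForm_apply, Pi.neg_apply, covDeriv_apply, map_add, map_neg, LinearMap.add_apply,
    hg.christoffel_symm _ (W x)]
  linarith

theorem IsKillingField.ricciCurv_self (hK : IsKillingField g W) (hg : IsPseudoRiemannian g)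
    (LC : LeviCivita g) (hW : ContDiff ℝ 2 W) {c : ℝ} (hc : ∀ p, g p (W p) (W p) = c)
    (x : Evec n) :
    RicciCurv LC.nab x (W x) (W x) =
      -LinearMap.trace ℝ (Evec n)
        (covDeriv (christoffel g) W x ∘L covDeriv (christoffel g) W x) := by
  have geodesic : (fun p ↦ covDeriv (christoffel g) W p (W p)) = 0 :=
    funext fun p ↦ hg.covDeriv_self_eq_zero (hW.differentiable (by simp) p)
      (hK.isSkewAdjoint_covDeriv hg p) hc
  have divergence_free :
      (fun p ↦ LinearMap.trace ℝ (Evec n) (covDeriv (christoffel g) W p)) = 0 :=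
    funext fun p ↦ trace_eq_zero_of_isSkewAdjoint (hg.nondegenerate p)
      (hK.isSkewAdjoint_covDeriv hg p)
  rw [LC.ricciCurv_eq_trace hg,
    trace_curvatureOperator_self hg.differentiable_christoffel.differentiableAt
      hg.christoffel_symm hW.contDiffAt, geodesic, divergence_free]
  simp [covDeriv]

theorem IsKillingField.ricciCurv_self_nonneg (hK : IsKillingField g W) (hg : IsRiemannian g)
    (LC : LeviCivita g) (hW : ContDiff ℝ 2 W) {c : ℝ} (hc : ∀ p, g p (W p) (W p) = c)
    (x : Evec n) : 0 ≤ RicciCurv LC.nab x (W x) (W x) := by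
  rw [hK.ricciCurv_self hg.isPseudoRiemannian LC hW hc, neg_nonneg]
  exact trace_mul_self_nonpos_of_isSkewAdjoint ⟨hg.2.1 x⟩ (hg.2.2 x)
    (hK.isSkewAdjoint_covDeriv hg.isPseudoRiemannian x)

end Killing

theorem no_strong_kropina_on_negative_ricci_general {n : ℕ} {g : MetricT n}
    (hg : IsRiemannian g) (LC : LeviCivita g) {x : Evec n}
    (hneg : ∀ v, v ≠ 0 → RicciCurv LC.nab x v v < 0) {W : Evec n → Evec n}
    (hW : ContDiff ℝ 2 W) (hK : IsKillingField g W) {c : ℝ} (hc : ∀ p, g p (W p) (W p) = c) :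
    W = 0 := by
  have hWx : W x = 0 := by
    by_contra hne
    exact (hneg (W x) hne).not_ge (hK.ricciCurv_self_nonneg hg LC hW hc x)
  have hc₀ : c = 0 := by simpa [hWx] using (hc x).symm
  funext p
  by_contra hne
  exact (hg.2.2 p (W p) hne).ne' ((hc p).trans hc₀)

/-- A Riemannian manifold `(M,h)` of negative Ricci curvature admits no
nowhere-vanishing Killing vector field of constant length; in particular `M` admits no
strong Kropina metric with underlying Riemannian metric `h` (i.e. no unit-length Killing
field). -/
theorem no_strong_kropina_on_negative_ricci {n : ℕ} (g : MetricT n)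
    (hg : IsRiemannian g) (LC : LeviCivita g)
    (hneg : ∀ x v, v ≠ 0 → RicciCurv LC.nab x v v < 0) :
    (¬ ∃ W : Evec n → Evec n, ContDiff ℝ (⊤ : ℕ∞) W ∧ IsKillingField g W ∧
      (∀ x, W x ≠ 0) ∧ (∃ c : ℝ, ∀ x, g x (W x) (W x) = c)) ∧
    (¬ ∃ W : Evec n → Evec n, ContDiff ℝ (⊤ : ℕ∞) W ∧ IsKillingField g W ∧
      ∀ x, g x (W x) (W x) = 1) := by
  have hzero {W : Evec n → Evec n} (hW : ContDiff ℝ (⊤ : ℕ∞) W) (hK : IsKillingField g W) {c : ℝ}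
      (hc : ∀ x, g x (W x) (W x) = c) : W = 0 :=
    no_strong_kropina_on_negative_ricci_general hg LC (hneg 0) (contDiff_infty.mp hW 2) hK hc
  refine ⟨fun ⟨W, hW, hK, hne, c, hc⟩ ↦ hne 0 (congrFun (hzero hW hK hc) 0), ?_⟩
  rintro ⟨W, hW, hK, hc⟩
  simpa [hzero hW hK hc] using hc 0
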